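/- Let G = ⟨g_0, ..., g_{n-1}⟩ be an sggi and let 0 ≤ i ≤ n-2. Suppose there exists a string C-group H = ⟨h_0, ..., h_i⟩ of rank i+1 which covers the sggi ⟨g_0, ..., g_i⟩. Then there exists a string C-group L = ⟨l_0, ..., l_{i+1}⟩ of rank i+2 which covers ⟨g_0, ..., g_{i+1}⟩. Moreover, L may be chosen so that: (i) for every j ≤ i, if ⟨g_0, ..., g_j⟩ is isomorphic to ⟨h_0, ..., h_j⟩ via a map sending h_t to g_t, then ⟨g_0, ..., g_j⟩ is isomorphic to ⟨l_0, ..., l_j⟩ via a map sending l_t to g_t; and (ii) if ⟨g_0, ..., g_{i+1}⟩ and H are both finite, then L is finite. -/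

import Mathlib

/-- A string group generated by involutions (sggi): the group is generated by
`g 0, ..., g (n-1)`, each `g i` squares to the identity, and
`(g i * g j)^2 = 1` whenever `|i - j| > 1`. -/
def IsSggi {G : Type*} [Group G] {n : ℕ} (g : Fin n → G) : Prop :=
  Subgroup.closure (Set.range g) = ⊤ ∧ (∀ i, g i ^ 2 = 1) ∧
    ∀ i j : Fin n, 1 < |(i : ℤ) - (j : ℤ)| → (g i * g j) ^ 2 = 1

/-- A string C-group: an sggi whose generators have order exactly `2` and which
satisfies the intersection condition. -/
def IsStringCGroup {G : Type*} [Group G] {n : ℕ} (g : Fin n → G) : Prop :=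
  IsSggi g ∧ (∀ i, orderOf (g i) = 2) ∧
    ∀ I J : Set (Fin n),
      Subgroup.closure (g '' I) ⊓ Subgroup.closure (g '' J)
        = Subgroup.closure (g '' (I ∩ J))

/-- `H` (generated by `h 0, ..., h (k-1)`) covers the sggi `⟨g 0, ..., g (k-1)⟩`:
there is a homomorphism sending each `h t` to `g t` whose range is exactly the
subgroup generated by the `g t`, i.e. an epimorphism of sggi's. -/
def SggiCovers {H G : Type*} [Group H] [Group G] {k : ℕ}
    (h : Fin k → H) (g : Fin k → G) : Prop :=
  ∃ φ : H →* G, (∀ t, φ (h t) = g t) ∧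
    φ.range = Subgroup.closure (Set.range g)

/-- The sggi `⟨h 0, ..., h (k-1)⟩` is isomorphic to the sggi
`⟨g 0, ..., g (k-1)⟩` via a map sending each `h t` to `g t`: there is an
injective homomorphism on the subgroup generated by the `h t` sending each `h t`
to `g t` (its range is then automatically the subgroup generated by the `g t`). -/
def SggiIsoVia {H G : Type*} [Group H] [Group G] {k : ℕ}
    (h : Fin k → H) (g : Fin k → G) : Prop :=
  ∃ φ : ↥(Subgroup.closure (Set.range h)) →* G,
    Function.Injective φ ∧
    ∀ t, φ ⟨h t, Subgroup.subset_closure (Set.mem_range_self t)⟩ = g t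

/-- A group bundled with its carrier. -/
structure BundledGroup where
  carrier : Type
  [grp : Group carrier]

attribute [instance] BundledGroup.grp

/-!
Let `L` be the mix of the degenerate extension `⟨h 0, ..., h i⟩ × C₂` with `⟨g 0, ..., g (i+1)⟩`,
that is, the subgroup of `H × C₂ × G` generated by the triples `(h t, 1, g t)` for `t ≤ i` and
`(1, -1, g (i+1))`. The covering `H → G` makes the projection `L → H` injective on the subgroup
generated by the first `i + 1` generators, so the intersection condition of `H` passes to every pair
of index sets one of which omits the last index. If both contain it, let `k` be the largest index
missing from one of them, say from `J`. The generators below `k` commute with those above `k`, so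
`⟨J⟩` is the product of its parts below and above `k`; the upper part lies in the other subgroup,
and the modular law reduces the intersection to the part below `k`, which omits the last index.
-/

open scoped Pointwise

section Closure

variable {ι G K : Type*} [Group G] [Group K]

theorem commute_of_sq_eq_one {a b : G} (ha : a ^ 2 = 1) (hb : b ^ 2 = 1)
    (hab : (a * b) ^ 2 = 1) : Commute a b := by
  rw [sq, ← eq_inv_iff_mul_eq_one] at ha hb hab
  calc
    a * b = b⁻¹ * a⁻¹ := by rw [← mul_inv_rev, ← hab]
    _ = b * a := by rw [← ha, ← hb]

theorem coe_closure_union_of_commute {S T : Set G} (hST : ∀ s ∈ S, ∀ t ∈ T, Commute s t) :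
    (Subgroup.closure (S ∪ T) : Set G) = Subgroup.closure S * Subgroup.closure T := by
  have hT : Subgroup.closure T ≤ Subgroup.centralizer (Subgroup.closure S) := by
    rw [Subgroup.centralizer_closure, Subgroup.closure_le]
    exact fun t ht ↦ Subgroup.mem_centralizer_iff.2 fun s hs ↦ hST s hs t ht
  rw [Subgroup.closure_union]
  exact Subgroup.coe_mul_of_right_le_normalizer_left _ _
    (hT.trans (Subgroup.centralizer_le_normalizer _))

theorem range_eq_closure_of_closure_eq_top {l : ι → G} {k : ι → K}
    (hl : Subgroup.closure (Set.range l) = ⊤) {φ : G →* K} (hφ : ∀ t, φ (l t) = k t) :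
    φ.range = Subgroup.closure (Set.range k) := by
  rw [MonoidHom.range_eq_map, ← hl, MonoidHom.map_closure, ← Set.range_comp]
  exact congrArg (fun f ↦ Subgroup.closure (Set.range f)) (funext hφ)

/-- The generators `a t`, regarded as elements of the subgroup they generate. -/
def closureGen (a : ι → G) (t : ι) : Subgroup.closure (Set.range a) :=
  ⟨a t, Subgroup.subset_closure ⟨t, rfl⟩⟩

theorem closure_range_closureGen (a : ι → G) :
    Subgroup.closure (Set.range (closureGen a)) = ⊤ := by
  rw [← Subgroup.closure_closure_coe_preimage]
  congr 1
  ext ⟨x, hx⟩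
  simp [closureGen, Subtype.ext_iff]

end Closure

section IntersectionCondition

variable {ι L K : Type*} [Group L] [Group K] {l : ι → L} {k : ι → K}

/-- The intersection condition `⟨g_I⟩ ∩ ⟨g_J⟩ = ⟨g_{I ∩ J}⟩` of string C-groups, for an arbitrary
family of group elements. -/
def IntersectionCondition (g : ι → K) : Prop :=
  ∀ I J : Set ι, Subgroup.closure (g '' I) ⊓ Subgroup.closure (g '' J)
    = Subgroup.closure (g '' (I ∩ J))

theorem intersectionCondition_of_le
    (h : ∀ I J : Set ι, Subgroup.closure (l '' I) ⊓ Subgroup.closure (l '' J)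
      ≤ Subgroup.closure (l '' (I ∩ J))) : IntersectionCondition l := fun I J ↦
  (h I J).antisymm (le_inf (Subgroup.closure_mono (Set.image_mono Set.inter_subset_left))
    (Subgroup.closure_mono (Set.image_mono Set.inter_subset_right)))

theorem IntersectionCondition.closure_inf_closure_le_of_injOn (hk : IntersectionCondition k)
    {ρ : L →* K} (hρ : ∀ t, ρ (l t) = k t) {I : Set ι}
    (hinj : Set.InjOn ρ (Subgroup.closure (l '' I))) (J : Set ι) :
    Subgroup.closure (l '' I) ⊓ Subgroup.closure (l '' J) ≤ Subgroup.closure (l '' (I ∩ J)) := by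
  have hmap (S : Set ι) : (Subgroup.closure (l '' S)).map ρ = Subgroup.closure (k '' S) := by
    simp only [MonoidHom.map_closure, Set.image_image, hρ]
  rintro x ⟨hxI, hxJ⟩
  have hx : ρ x ∈ (Subgroup.closure (l '' (I ∩ J))).map ρ := by
    rw [hmap, ← hk, ← hmap, ← hmap]
    exact ⟨Subgroup.mem_map_of_mem ρ hxI, Subgroup.mem_map_of_mem ρ hxJ⟩
  obtain ⟨y, hy, hyx⟩ := hx
  have hyI := Subgroup.closure_mono (Set.image_mono Set.inter_subset_left) hy
  exact hinj hyI hxI hyx ▸ hy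

theorem IntersectionCondition.of_injective (hk : IntersectionCondition k) {ρ : L →* K}
    (hρ : ∀ t, ρ (l t) = k t) (hinj : Function.Injective ρ) : IntersectionCondition l :=
  intersectionCondition_of_le fun _ J ↦ hk.closure_inf_closure_le_of_injOn hρ hinj.injOn J

theorem closure_image_snoc_one {m : ℕ} (h : Fin m → K) (I : Set (Fin (m + 1))) :
    Subgroup.closure (Fin.snoc (α := fun _ ↦ K) h 1 '' I)
      = Subgroup.closure (h '' (Fin.castSucc ⁻¹' I)) := by
  refine le_antisymm ((Subgroup.closure_le _).2 ?_) (Subgroup.closure_mono ?_)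
  · rintro _ ⟨t, ht, rfl⟩
    induction t using Fin.lastCases with
    | last => simp
    | cast t =>
      rw [Fin.snoc_castSucc]
      exact Subgroup.subset_closure ⟨t, ht, rfl⟩
  · rintro _ ⟨t, ht, rfl⟩
    exact ⟨t.castSucc, ht, Fin.snoc_castSucc ..⟩

theorem IntersectionCondition.snoc_one {m : ℕ} {h : Fin m → K} (hh : IntersectionCondition h) :
    IntersectionCondition (Fin.snoc (α := fun _ ↦ K) h 1) := fun I J ↦ by
  simp only [closure_image_snoc_one, Set.preimage_inter, hh _ _]

end IntersectionCondition

/-- The relations of an sggi, without the requirement that the family generate the ambient group. -/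
def StringRelations {G : Type*} [Group G] {n : ℕ} (g : Fin n → G) : Prop :=
  (∀ i, g i ^ 2 = 1) ∧ ∀ i j : Fin n, 1 < |(i : ℤ) - (j : ℤ)| → (g i * g j) ^ 2 = 1

namespace StringRelations

variable {G : Type*} [Group G] {n : ℕ} {g : Fin n → G}

theorem of_sq_eq_one (hG : ∀ x : G, x ^ 2 = 1) (g : Fin n → G) : StringRelations g :=
  ⟨fun _ ↦ hG _, fun _ _ _ ↦ hG _⟩

theorem comp_castLE {m : ℕ} (hg : StringRelations g) (hmn : m ≤ n) :
    StringRelations fun t ↦ g (Fin.castLE hmn t) :=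
  ⟨fun _ ↦ hg.1 _, fun _ _ hst ↦ hg.2 _ _ hst⟩

theorem snoc_one (hg : StringRelations g) :
    StringRelations (Fin.snoc (α := fun _ ↦ G) g 1) := by
  refine ⟨fun t ↦ ?_, fun s t hst ↦ ?_⟩
  · induction t using Fin.lastCases <;> simp [hg.1]
  · induction s using Fin.lastCases <;> induction t using Fin.lastCases
    case cast.cast s t => simpa using hg.2 s t (by simpa using hst)
    all_goals simp [hg.1]

theorem commute_of_lt_of_lt (hg : StringRelations g) {i m j : Fin n} (him : i < m) (hmj : m < j) :
    Commute (g i) (g j) := by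
  refine commute_of_sq_eq_one (hg.1 i) (hg.1 j) (hg.2 i j ?_)
  rw [lt_abs]
  omega

theorem coe_closure_image_of_notMem (hg : StringRelations g) {J : Set (Fin n)} {m : Fin n}
    (hm : m ∉ J) :
    (Subgroup.closure (g '' J) : Set G)
      = Subgroup.closure (g '' (J ∩ Set.Iio m)) * Subgroup.closure (g '' (J ∩ Set.Ioi m)) := by
  have hJ : J = J ∩ Set.Iio m ∪ J ∩ Set.Ioi m := by
    rw [← Set.inter_union_distrib_left, Set.Iio_union_Ioi, Set.left_eq_inter]
    exact Set.subset_compl_singleton_iff.2 hm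
  conv_lhs => rw [hJ, Set.image_union]
  refine coe_closure_union_of_commute ?_
  rintro _ ⟨i, hi, rfl⟩ _ ⟨j, hj, rfl⟩
  exact hg.commute_of_lt_of_lt hi.2 hj.2

theorem closure_inf_closure_le_of_Ioi_subset (hg : StringRelations g) {I J : Set (Fin n)}
    {m : Fin n} (hmJ : m ∉ J) (hmI : Set.Ioi m ⊆ I)
    (hlow : Subgroup.closure (g '' (J ∩ Set.Iio m)) ⊓ Subgroup.closure (g '' I)
      ≤ Subgroup.closure (g '' (J ∩ Set.Iio m ∩ I))) :
    Subgroup.closure (g '' J) ⊓ Subgroup.closure (g '' I)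
      ≤ Subgroup.closure (g '' (J ∩ I)) := by
  have hhigh : Subgroup.closure (g '' (J ∩ Set.Ioi m)) ≤ Subgroup.closure (g '' (J ∩ I)) :=
    Subgroup.closure_mono (Set.image_mono (Set.inter_subset_inter_right J hmI))
  have hhighI := hhigh.trans (Subgroup.closure_mono (Set.image_mono Set.inter_subset_right))
  have hlowIJ := hlow.trans (Subgroup.closure_mono
    (Set.image_mono (Set.inter_subset_inter_left I Set.inter_subset_left)))
  rw [← SetLike.coe_subset_coe, Subgroup.coe_inf, hg.coe_closure_image_of_notMem hmJ,
    Set.inter_comm, ← Subgroup.inf_mul_assoc _ _ _ hhighI, inf_comm]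
  rintro _ ⟨c, hc, d, hd, rfl⟩
  exact mul_mem (hlowIJ hc) (hhigh hd)

theorem intersectionCondition_of_last_notMem {m : ℕ} {g : Fin (m + 1) → G}
    (hg : StringRelations g)
    (h : ∀ I J : Set (Fin (m + 1)), Fin.last m ∉ I →
      Subgroup.closure (g '' I) ⊓ Subgroup.closure (g '' J) ≤ Subgroup.closure (g '' (I ∩ J))) :
    IntersectionCondition g := by
  refine intersectionCondition_of_le fun I J ↦ ?_
  by_cases hIJ : I ∩ J = Set.univ
  · rw [hIJ, Set.univ_subset_iff.1 (hIJ.ge.trans Set.inter_subset_left)]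
    exact inf_le_left
  obtain ⟨k, hk⟩ := (Set.toFinite (I ∩ J)ᶜ).exists_maximal (Set.nonempty_compl.2 hIJ)
  have hIoi : Set.Ioi k ⊆ I ∩ J := fun t hkt ↦ by
    by_contra ht
    exact hk.not_gt ht hkt
  have hlast (S : Set (Fin (m + 1))) : Fin.last m ∉ S ∩ Set.Iio k :=
    fun hS ↦ (Fin.le_last k).not_gt hS.2
  by_cases hkI : k ∈ I
  · have hkJ : k ∉ J := fun hkJ ↦ hk.prop ⟨hkI, hkJ⟩
    rw [inf_comm, Set.inter_comm]
    exact hg.closure_inf_closure_le_of_Ioi_subset hkJ (hIoi.trans Set.inter_subset_left)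
      (h _ _ (hlast J))
  · exact hg.closure_inf_closure_le_of_Ioi_subset hkI (hIoi.trans Set.inter_subset_right)
      (h _ _ (hlast I))

/-- The quotient criterion of McMullen and Schulte, *Abstract Regular Polytopes*. -/
theorem intersectionCondition_of_injOn {K : Type*} [Group K] {m : ℕ} {g : Fin (m + 1) → G}
    {k : Fin (m + 1) → K} (hg : StringRelations g) (hk : IntersectionCondition k) {ρ : G →* K}
    (hρ : ∀ t, ρ (g t) = k t)
    (hinj : Set.InjOn ρ (Subgroup.closure (g '' {Fin.last m}ᶜ))) : IntersectionCondition g :=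
  hg.intersectionCondition_of_last_notMem fun _ J hI ↦
    hk.closure_inf_closure_le_of_injOn hρ (hinj.mono (Subgroup.closure_mono
      (Set.image_mono (Set.subset_compl_singleton_iff.2 hI)))) J

theorem isSggi_closureGen (hg : StringRelations g) : IsSggi (closureGen g) :=
  ⟨closure_range_closureGen g, fun t ↦ Subtype.ext (hg.1 t),
    fun s t hst ↦ Subtype.ext (hg.2 s t hst)⟩

theorem isStringCGroup_closureGen (hg : StringRelations g) (hne : ∀ t, g t ≠ 1)
    (hint : IntersectionCondition g) : IsStringCGroup (closureGen g) :=
  ⟨hg.isSggi_closureGen,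
    fun t ↦ orderOf_eq_prime (hg.isSggi_closureGen.2.1 t) fun h1 ↦ hne t (congrArg Subtype.val h1),
    hint.of_injective (ρ := Subgroup.subtype _) (fun _ ↦ rfl) Subtype.val_injective⟩

end StringRelations

section Morphisms

variable {L H G : Type*} [Group L] [Group H] [Group G] {n : ℕ} {l : Fin n → L} {h : Fin n → H}
  {g : Fin n → G}

theorem sggiCovers_closureGen {π : L →* G} (hπ : ∀ t, π (l t) = g t) :
    SggiCovers (closureGen l) g :=
  ⟨π.comp (Subgroup.subtype _), hπ,
    range_eq_closure_of_closure_eq_top (closure_range_closureGen l) hπ⟩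

theorem SggiIsoVia.of_injOn {ρ : L →* H} (hρ : ∀ t, ρ (l t) = h t)
    (hinj : Set.InjOn ρ (Subgroup.closure (Set.range l))) : SggiIsoVia l h :=
  ⟨ρ.comp (Subgroup.subtype _), hinj.injective, hρ⟩

theorem SggiIsoVia.trans (hlh : SggiIsoVia l h) (hhg : SggiIsoVia h g) : SggiIsoVia l g := by
  obtain ⟨φ, hφ, hφh⟩ := hlh
  obtain ⟨ψ, hψ, hψg⟩ := hhg
  have hmem (x) : φ x ∈ Subgroup.closure (Set.range h) :=
    range_eq_closure_of_closure_eq_top (closure_range_closureGen l) hφh ▸ ⟨x, rfl⟩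
  refine ⟨ψ.comp (φ.codRestrict _ hmem), hψ.comp ((MonoidHom.injective_codRestrict ..).2 hφ),
    fun t ↦ ?_⟩
  rw [← hψg t]
  exact congrArg ψ (Subtype.ext (hφh t))

end Morphisms

section Mix

variable {ι A B : Type*}

/-- The generators of the mix of two families of group elements with the same index set; the mix
itself is the subgroup of `A × B` that they generate. -/
def mix (a : ι → A) (b : ι → B) (t : ι) : A × B :=
  (a t, b t)

variable [Group A] [Group B]

theorem StringRelations.mix {n : ℕ} {a : Fin n → A} {b : Fin n → B} (ha : StringRelations a)
    (hb : StringRelations b) : StringRelations (mix a b) :=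
  ⟨fun t ↦ Prod.ext (ha.1 t) (hb.1 t), fun s t hst ↦ Prod.ext (ha.2 s t hst) (hb.2 s t hst)⟩

theorem injOn_fst_closure_mix {a : ι → A} {b : ι → B} {S : Set ι} {ψ : A →* B}
    (hψ : ∀ t ∈ S, ψ (a t) = b t) :
    Set.InjOn (MonoidHom.fst A B) (Subgroup.closure (mix a b '' S)) := by
  have hgraph : Set.EqOn (ψ.comp (MonoidHom.fst A B)) (MonoidHom.snd A B)
      (Subgroup.closure (mix a b '' S)) := by
    refine MonoidHom.eqOn_closure ?_
    rintro _ ⟨t, ht, rfl⟩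
    exact hψ t ht
  exact fun x hx y hy hxy ↦
    Prod.ext hxy ((hgraph hx).symm.trans ((congrArg ψ hxy).trans (hgraph hy)))

theorem finite_closure_mix (a : ι → A) (b : ι → B) [Finite (Subgroup.closure (Set.range a))]
    [Finite (Subgroup.closure (Set.range b))] :
    Finite (Subgroup.closure (Set.range (mix a b))) := by
  have hle : Subgroup.closure (Set.range (mix a b))
      ≤ (Subgroup.closure (Set.range a)).prod (Subgroup.closure (Set.range b)) := by
    rw [Subgroup.closure_le]
    rintro _ ⟨t, rfl⟩
    exact ⟨Subgroup.subset_closure ⟨t, rfl⟩, Subgroup.subset_closure ⟨t, rfl⟩⟩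
  exact ((Set.toFinite (Subgroup.closure (Set.range a) : Set A)).prod
    (Set.toFinite (Subgroup.closure (Set.range b) : Set B))).subset hle

end Mix

section Bump

variable {H G : Type*} [Group H] {m : ℕ} {h : Fin m → H} {g : Fin (m + 1) → G}

/-- The generators `(h t, 1, g t)` for `t < m`, and `(1, -1, g m)`, of the string C-group covering
`⟨g 0, ..., g m⟩`. The cyclic group of order two is encoded as `ℤˣ`; it keeps the last generator
nontrivial when `g m = 1`. -/
def bumpGen (h : Fin m → H) (g : Fin (m + 1) → G) : Fin (m + 1) → H × ℤˣ × G :=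
  mix (Fin.snoc (α := fun _ ↦ H) h 1) (mix (Pi.mulSingle (Fin.last m) (-1)) g)

theorem fst_bumpGen_castSucc (h : Fin m → H) (g : Fin (m + 1) → G) (t : Fin m) :
    (bumpGen h g t.castSucc).1 = h t := by
  simp only [bumpGen, mix, Fin.snoc_castSucc]

variable [Group G]

theorem stringRelations_bumpGen (hh : StringRelations h) (hg : StringRelations g) :
    StringRelations (bumpGen h g) :=
  hh.snoc_one.mix ((StringRelations.of_sq_eq_one Int.units_sq _).mix hg)

theorem bumpGen_ne_one (hh : ∀ t, h t ≠ 1) (t : Fin (m + 1)) : bumpGen h g t ≠ 1 := by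
  intro h1
  induction t using Fin.lastCases with
  | last => simpa [bumpGen, mix] using congrArg (fun x ↦ x.2.1) h1
  | cast t => exact hh t (fst_bumpGen_castSucc h g t ▸ congrArg Prod.fst h1)

theorem injOn_fst_closure_bumpGen {φ : H →* G} (hφ : ∀ t, φ (h t) = g t.castSucc) :
    Set.InjOn (MonoidHom.fst H (ℤˣ × G))
      (Subgroup.closure (bumpGen h g '' {Fin.last m}ᶜ)) := by
  refine injOn_fst_closure_mix (ψ := (1 : H →* ℤˣ).prod φ) fun t ht ↦ ?_
  obtain ⟨t, rfl⟩ := Fin.exists_castSucc_eq.2 ht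
  simp [mix, hφ]

theorem isStringCGroup_bumpGen (hh : IsStringCGroup h) (hg : StringRelations g) {φ : H →* G}
    (hφ : ∀ t, φ (h t) = g t.castSucc) : IsStringCGroup (closureGen (bumpGen h g)) := by
  have hne (t : Fin m) : h t ≠ 1 := fun h1 ↦ by simpa [h1] using hh.2.1 t
  have hint : IntersectionCondition h := hh.2.2
  have hrel := stringRelations_bumpGen hh.1.2 hg
  exact hrel.isStringCGroup_closureGen (bumpGen_ne_one hne)
    (hrel.intersectionCondition_of_injOn hint.snoc_one (fun _ ↦ rfl) (injOn_fst_closure_bumpGen hφ))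

theorem sggiIsoVia_bumpGen {φ : H →* G} (hφ : ∀ t, φ (h t) = g t.castSucc) {j : ℕ} (hj : j ≤ m) :
    SggiIsoVia (fun t : Fin j ↦ closureGen (bumpGen h g) (Fin.castLE hj t).castSucc)
      (fun t ↦ h (Fin.castLE hj t)) := by
  let a : Fin j → H × ℤˣ × G := fun t ↦ bumpGen h g (Fin.castLE hj t).castSucc
  have ha : Set.range a ⊆ bumpGen h g '' {Fin.last m}ᶜ := by
    rintro _ ⟨t, rfl⟩
    exact ⟨_, Fin.castSucc_ne_last _, rfl⟩
  have hgen : SggiIsoVia (fun t ↦ closureGen (bumpGen h g) (Fin.castLE hj t).castSucc) a :=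
    .of_injOn (ρ := Subgroup.subtype _) (fun _ ↦ rfl) Subtype.val_injective.injOn
  exact hgen.trans (.of_injOn (ρ := MonoidHom.fst H (ℤˣ × G)) (fun _ ↦ fst_bumpGen_castSucc h g _)
    ((injOn_fst_closure_bumpGen hφ).mono (Subgroup.closure_mono ha)))

theorem finite_closure_bumpGen [Finite H] [Finite (Subgroup.closure (Set.range g))] :
    Finite (Subgroup.closure (Set.range (bumpGen h g))) :=
  have := finite_closure_mix (Pi.mulSingle (Fin.last m) (-1 : ℤˣ)) g
  finite_closure_mix _ _

end Bump

/-- **Lemma (bump).**  Let `G = ⟨g 0, ..., g (n-1)⟩` be an sggi and `0 ≤ i ≤ n-2`.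
If there is a string C-group `H = ⟨h 0, ..., h i⟩` covering `⟨g 0, ..., g i⟩`,
then there is a string C-group `L = ⟨l 0, ..., l (i+1)⟩` covering
`⟨g 0, ..., g (i+1)⟩`; moreover `L` may be chosen so that (i) for every `j ≤ i`,
if `⟨g 0, ..., g j⟩ ≅ ⟨h 0, ..., h j⟩` via `h t ↦ g t` then also
`⟨g 0, ..., g j⟩ ≅ ⟨l 0, ..., l j⟩` via `l t ↦ g t`, and (ii) if
`⟨g 0, ..., g (i+1)⟩` and `H` are finite then `L` is finite. -/
theorem stringCGroup_cover_bump {n : ℕ} {G : Type} [Group G] (g : Fin n → G)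
    (hG : IsSggi g) (i : ℕ) (hi : i + 2 ≤ n)
    {H : Type} [Group H] (h : Fin (i + 1) → H) (hH : IsStringCGroup h)
    (hcov : SggiCovers h (fun t : Fin (i + 1) => g (Fin.castLE (by omega) t))) :
    ∃ (L : BundledGroup) (l : Fin (i + 2) → L.carrier),
      IsStringCGroup l ∧
      SggiCovers l (fun t : Fin (i + 2) => g (Fin.castLE (by omega) t)) ∧
      (∀ j : ℕ, (hj : j + 1 ≤ i + 1) →
        SggiIsoVia (fun t : Fin (j + 1) => h (Fin.castLE (by omega) t))
            (fun t : Fin (j + 1) => g (Fin.castLE (by omega) t)) →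
        SggiIsoVia (fun t : Fin (j + 1) => l (Fin.castLE (by omega) t))
            (fun t : Fin (j + 1) => g (Fin.castLE (by omega) t))) ∧
      (Finite H →
        Finite ↥(Subgroup.closure
          (Set.range fun t : Fin (i + 2) => g (Fin.castLE (by omega) t))) →
        Finite L.carrier) := by
  obtain ⟨φ, hφ, -⟩ := hcov
  let g' : Fin (i + 2) → G := fun t ↦ g (Fin.castLE hi t)
  have hφ' (t : Fin (i + 1)) : φ (h t) = g' t.castSucc := hφ t
  have hg' : StringRelations g' := StringRelations.comp_castLE hG.2 hi
  let π : H × ℤˣ × G →* G := (MonoidHom.snd _ _).comp (MonoidHom.snd _ _)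
  exact ⟨⟨Subgroup.closure (Set.range (bumpGen h g'))⟩, closureGen (bumpGen h g'),
    isStringCGroup_bumpGen hH hg' hφ', sggiCovers_closureGen (π := π) fun _ ↦ rfl,
    fun j hj hiso ↦ (sggiIsoVia_bumpGen hφ' hj).trans hiso, fun _ _ ↦ finite_closure_bumpGen⟩
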